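/- There is no diffuse mean on ℕ invariant under all order-preserving surjections: there exists no mean μ on ℕ such that μ(1_E) = 0 for every finite E ⊆ ℕ and μ(f ∘ g) = μ(f) for every f ∈ ℓ^∞(ℕ) and every surjective order-preserving map g : ℕ → ℕ. -/

import Mathlib

/-!
Diffuseness together with invariance under the truncated predecessor `s` determines the mean of
every periodic function: it is the average over one period. The indicator of the even numbers thus
has mean `1 / 2`. Repeating each even number twice is an order-preserving surjection, `stretch`,
and it pulls this indicator back to the sequence `0, 1, 1, 0, 1, 1, …`, of mean `2 / 3`. Invariance
under `stretch` is therefore impossible.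
-/

/-- `f` is a bounded real-valued function, i.e. an element of `ℓ^∞`. -/
def Bdd {X : Type*} (f : X → ℝ) : Prop := ∃ C : ℝ, ∀ x, |f x| ≤ C

/-- A mean on a set `X`: a positive normalized linear functional on `ℓ^∞(X)`
(we represent it as a functional on all functions, constrained only on bounded ones). -/
def IsMean {X : Type*} (ν : (X → ℝ) → ℝ) : Prop :=
  (∀ f g : X → ℝ, Bdd f → Bdd g → ν (f + g) = ν f + ν g) ∧
  (∀ (c : ℝ) (f : X → ℝ), Bdd f → ν (c • f) = c * ν f) ∧
  (∀ f : X → ℝ, Bdd f → (∀ x, 0 ≤ f x) → 0 ≤ ν f) ∧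
  ν (fun _ => 1) = 1


theorem Bdd.add {X : Type*} {f g : X → ℝ} (hf : Bdd f) (hg : Bdd g) : Bdd (f + g) := by
  obtain ⟨C, hC⟩ := hf
  obtain ⟨D, hD⟩ := hg
  exact ⟨C + D, fun x => (abs_add_le _ _).trans (add_le_add (hC x) (hD x))⟩

theorem bdd_indicator {X : Type*} (p : X → Prop) [DecidablePred p] :
    Bdd (fun x => if p x then (1 : ℝ) else 0) :=
  ⟨1, fun x => by dsimp only; split_ifs <;> norm_num⟩

/-- The truncated predecessor `1, 2, 3, 4, … ↦ 1, 1, 2, 3, …`. -/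
def s (n : ℕ+) : ℕ+ := ⟨max (n - 1 : ℕ) 1, by omega⟩

/-- The order-preserving surjection `1, 2, 3, 4, 5, 6, … ↦ 1, 2, 2, 3, 4, 4, …`, which takes every
even value twice and every odd value once. -/
def stretch (n : ℕ+) : ℕ+ := ⟨(2 * n + 2) / 3, by have := n.pos; omega⟩

/-- The indicator function of the even numbers. -/
noncomputable def ev (n : ℕ+) : ℝ := if 2 ∣ (n : ℕ) then 1 else 0

theorem s_monotone : Monotone s := by
  intro a b h
  have h' : (a : ℕ) ≤ b := h
  change max ((a : ℕ) - 1) 1 ≤ max ((b : ℕ) - 1) 1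
  omega

theorem s_surjective : Function.Surjective s := by
  intro b
  refine ⟨b + 1, PNat.eq ?_⟩
  have := b.pos
  change max (((b + 1 : ℕ+) : ℕ) - 1) 1 = b
  rw [PNat.add_coe, PNat.one_coe]
  omega

theorem stretch_monotone : Monotone stretch := by
  intro a b h
  have h' : (a : ℕ) ≤ b := h
  change (2 * (a : ℕ) + 2) / 3 ≤ (2 * (b : ℕ) + 2) / 3
  omega

theorem stretch_surjective : Function.Surjective stretch := by
  intro b
  have := b.pos
  refine ⟨⟨3 * b / 2, by omega⟩, PNat.eq ?_⟩
  change (2 * (3 * (b : ℕ) / 2) + 2) / 3 = b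
  omega

/-- The stretched indicator is `0, 1, 1, 0, 1, 1, …`. -/
theorem ev_stretch (n : ℕ+) : ev (stretch n) = if (n : ℕ) % 3 = 1 then 0 else 1 := by
  have h : 2 ∣ (2 * (n : ℕ) + 2) / 3 ↔ ¬ (n : ℕ) % 3 = 1 := by omega
  change (if 2 ∣ (2 * (n : ℕ) + 2) / 3 then (1 : ℝ) else 0) = _
  simp only [h, ite_not]

/-- There is no diffuse mean on `ℕ = {1,2,…}` (modelled by `ℕ+`) that is invariant
under all order-preserving surjections `g : ℕ → ℕ`. -/
theorem stmt_19 :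
    ¬ ∃ μ : (ℕ+ → ℝ) → ℝ, IsMean μ ∧
      (∀ E : Finset ℕ+, μ (fun x => if x ∈ E then (1 : ℝ) else 0) = 0) ∧
      (∀ f : ℕ+ → ℝ, Bdd f → ∀ g : ℕ+ → ℕ+, Monotone g → Function.Surjective g →
        μ (f ∘ g) = μ f) := by
  rintro ⟨μ, ⟨hadd, hsmul, -, hone⟩, hfin, hinv⟩
  have hs (f : ℕ+ → ℝ) (hf : Bdd f) : μ (f ∘ s) = μ f := hinv f hf s s_monotone s_surjective
  have comp_bdd {f : ℕ+ → ℝ} (hf : Bdd f) (g : ℕ+ → ℕ+) : Bdd (f ∘ g) :=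
    hf.imp fun _ hC x => hC (g x)
  have be : Bdd ev := bdd_indicator _
  have b1 : Bdd (fun x : ℕ+ => if x ∈ ({1} : Finset ℕ+) then (1 : ℝ) else 0) := bdd_indicator _
  have b2 : Bdd (fun x : ℕ+ => if x ∈ ({1, 2} : Finset ℕ+) then (1 : ℝ) else 0) :=
    bdd_indicator _
  have val (n : ℕ+) : ((s n : ℕ+) : ℕ) = max ((n : ℕ) - 1) 1 := rfl
  have mem1 (n : ℕ+) : n ∈ ({1} : Finset ℕ+) ↔ (n : ℕ) = 1 := by
    simp
  have mem2 (n : ℕ+) : n ∈ ({1, 2} : Finset ℕ+) ↔ (n : ℕ) = 1 ∨ (n : ℕ) = 2 := by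
    rw [Finset.mem_insert, Finset.mem_singleton, ← PNat.coe_inj, ← PNat.coe_inj]
    rfl
  -- Over one period the translates of `ev` sum to `1`, except at `1`, where `s` truncates.
  have e1 : ev + ev ∘ s + (fun x : ℕ+ => if x ∈ ({1} : Finset ℕ+) then (1 : ℝ) else 0)
      = fun _ => 1 := by
    funext n
    have := n.pos
    simp only [Pi.add_apply, Function.comp_apply, ev, val, mem1]
    split_ifs <;> first | omega | norm_num
  have half : μ ev + μ ev = 1 := by
    have h := congrArg μ e1
    rw [hadd _ _ (be.add (comp_bdd be s)) b1, hadd _ _ be (comp_bdd be s), hs _ be, hfin,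
      hone] at h
    linarith
  set t : ℕ+ → ℝ := ev ∘ stretch with ht
  have bt : Bdd t := comp_bdd be stretch
  have ht' (n : ℕ+) : t n = if (n : ℕ) % 3 = 1 then 0 else 1 := ev_stretch n
  have bts := comp_bdd bt s
  have btss := comp_bdd bts s
  -- The three translates of `t` sum to `2`, except for the values `0` at `1` and `1` at `2`.
  have e2 : t + t ∘ s + (t ∘ s) ∘ s
      + (fun x : ℕ+ => if x ∈ ({1} : Finset ℕ+) then (1 : ℝ) else 0)
      + (fun x : ℕ+ => if x ∈ ({1, 2} : Finset ℕ+) then (1 : ℝ) else 0)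
      = (2 : ℝ) • fun _ => 1 := by
    funext n
    have := n.pos
    simp only [Pi.add_apply, Pi.smul_apply, smul_eq_mul, Function.comp_apply, ht', val, mem1, mem2]
    split_ifs <;> first | omega | norm_num
  have third : μ t + μ t + μ t = 2 := by
    have h := congrArg μ e2
    rw [hadd _ _ (((bt.add bts).add btss).add b1) b2, hadd _ _ ((bt.add bts).add btss) b1,
      hadd _ _ (bt.add bts) btss, hadd _ _ bt bts, hs _ bts, hs _ bt, hfin, hfin,
      hsmul _ _ ⟨1, fun _ => by simp⟩, hone] at h
    linarith
  have hst : μ t = μ ev := hinv ev be stretch stretch_monotone stretch_surjective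
  linarith
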